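/- Let R be a commutative Noetherian ring and M an R-module admitting a resolution consisting of Matlis reflexive flat modules. Then a chain complex F_• → M → 0 is a minimal flat resolution of M if and only if the Matlis dual complex 0 → M^∨ → F_•^∨ is a minimal injective resolution of M^∨. -/

import Mathlib

universe u

variable (R : Type u) [CommRing R]

/-- A morphism `f : F → M` with `F` flat is a flat precover if every morphism from a
flat module to `M` factors through `f`. -/
def IsFlatPrecover {F M : Type u} [AddCommGroup F] [AddCommGroup M] [Module R F]
    [Module R M] (f : F →ₗ[R] M) : Prop :=
  Module.Flat R F ∧
    ∀ (F' : Type u) [AddCommGroup F'] [Module R F'], Module.Flat R F' →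
      ∀ g : F' →ₗ[R] M, ∃ h : F' →ₗ[R] F, f ∘ₗ h = g

/-- A flat precover `f : F → M` is a flat cover if every `h : F → F` with `f ∘ h = f`
is an automorphism. -/
def IsFlatCover {F M : Type u} [AddCommGroup F] [AddCommGroup M] [Module R F]
    [Module R M] (f : F →ₗ[R] M) : Prop :=
  IsFlatPrecover R f ∧ ∀ h : F →ₗ[R] F, f ∘ₗ h = f → Function.Bijective h

/-- A morphism `i : M → E` is an injective envelope if `E` is injective, `i` is
injective, and the image of `i` is an essential submodule of `E`. -/
def IsInjectiveEnvelope {M E : Type u} [AddCommGroup M] [AddCommGroup E] [Module R M]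
    [Module R E] (i : M →ₗ[R] E) : Prop :=
  Module.Injective R E ∧ Function.Injective i ∧
    ∀ N : Submodule R E, N ≠ ⊥ → N ⊓ LinearMap.range i ≠ ⊥

/-- An injective cogenerator is an injective module `E` such that `Hom(N, E) ≠ 0`
for every nonzero module `N`. -/
def IsInjectiveCogenerator (E : Type u) [AddCommGroup E] [Module R E] : Prop :=
  Module.Injective R E ∧
    ∀ (N : Type u) [AddCommGroup N] [Module R N], (∃ x : N, x ≠ 0) →
      ∃ g : N →ₗ[R] E, g ≠ 0

/-- `0 → M → I⁰ → I¹ → ⋯` is a minimal injective resolution if it is an injective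
resolution in which each map from the image of a differential into the next term is an
injective envelope. -/
def IsMinimalInjectiveResolution (M : Type u) [AddCommGroup M] [Module R M]
    (I : ℕ → Type u) [∀ n, AddCommGroup (I n)] [∀ n, Module R (I n)]
    (ι : M →ₗ[R] I 0) (d : ∀ n, I n →ₗ[R] I (n + 1)) : Prop :=
  (∀ n, Module.Injective R (I n)) ∧ Function.Injective ι ∧
    LinearMap.range ι = LinearMap.ker (d 0) ∧
    (∀ n, LinearMap.range (d n) = LinearMap.ker (d (n + 1))) ∧
    IsInjectiveEnvelope R (LinearMap.range ι).subtype ∧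
    ∀ n, IsInjectiveEnvelope R (LinearMap.range (d n)).subtype

/-- `⋯ → F₁ → F₀ → M → 0` is a minimal flat resolution if it is a resolution such
that each induced map `Fᵢ → im dᵢ` is a flat cover. -/
def IsMinimalFlatResolution (M : Type u) [AddCommGroup M] [Module R M]
    (F : ℕ → Type u) [∀ n, AddCommGroup (F n)] [∀ n, Module R (F n)]
    (π : F 0 →ₗ[R] M) (d : ∀ n, F (n + 1) →ₗ[R] F n) : Prop :=
  Function.Surjective π ∧
    LinearMap.range (d 0) = LinearMap.ker π ∧
    (∀ n, LinearMap.range (d (n + 1)) = LinearMap.ker (d n)) ∧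
    IsFlatCover R π ∧
    ∀ n, IsFlatCover R (d n).rangeRestrict

/-- Given a module `D` (to be thought of as `⊕ E(R/𝔫)`, the direct sum of injective
envelopes of the residue fields of all maximal ideals, so that `Hom_R(-, D)` is the
Matlis dual), a module `M` is Matlis reflexive if the evaluation map
`M → Hom_R(Hom_R(M, D), D)` is an isomorphism. -/
def IsMatlisReflexive (D : Type u) [AddCommGroup D] [Module R D]
    (M : Type u) [AddCommGroup M] [Module R M] : Prop :=
  Function.Bijective (LinearMap.applyₗ : M →ₗ[R] ((M →ₗ[R] D) →ₗ[R] D))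

section Helpers

variable {R}

def Ess {E : Type u} [AddCommGroup E] [Module R E] (S : Submodule R E) : Prop :=
  ∀ N : Submodule R E, N ≠ ⊥ → N ⊓ S ≠ ⊥

def Cogen (R : Type u) [CommRing R] (D : Type u) [AddCommGroup D] [Module R D] : Prop :=
  ∀ (N : Type u) [AddCommGroup N] [Module R N] (x : N),
    (∀ g : N →ₗ[R] D, g x = 0) → x = 0

open DirectSum in
theorem directSum_injective [IsNoetherianRing R] {ι : Type u} (En : ι → Type u)
    [∀ i, AddCommGroup (En i)] [∀ i, Module R (En i)]
    (hE : ∀ i, Module.Injective R (En i)) : Module.Injective R (⨁ i, En i) := by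
  classical
  refine Module.Baer.injective fun I g => ?_
  have hS : ∃ S : Finset ι, ∀ x : I, ∀ i ∉ S, g x i = 0 := by
    have hfg : (⊤ : Submodule R I).FG := IsNoetherian.noetherian _
    obtain ⟨t, ht⟩ := hfg
    refine ⟨t.biUnion fun x => DFinsupp.support (g x), fun x i hi => ?_⟩
    have hx : x ∈ Submodule.span R (t : Set I) := by rw [ht]; trivial
    induction hx using Submodule.span_induction with
    | mem y hy =>
      by_contra hne
      exact hi (Finset.mem_biUnion.2 ⟨y, hy, DFinsupp.mem_support_iff.2 hne⟩)
    | zero => simp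
    | add y z _ _ h1 h2 => rw [map_add, DirectSum.add_apply, h1, h2, add_zero]
    | smul r y _ h1 => rw [map_smul, DirectSum.smul_apply, h1, smul_zero]
  obtain ⟨S, hS⟩ := hS
  have hext : ∀ i, ∃ h : R →ₗ[R] En i, ∀ (x : R) (hx : x ∈ I), h x = g ⟨x, hx⟩ i := fun i =>
    Module.Baer.of_injective (hE i) I (DirectSum.component R ι En i ∘ₗ g)
  choose h hh using hext
  let e : ⨁ i, En i := DFinsupp.mk S (fun i => h i 1)
  refine ⟨LinearMap.toSpanSingleton R _ e, fun x hx => ?_⟩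
  refine DFinsupp.ext fun i => ?_
  rw [LinearMap.toSpanSingleton_apply]
  erw [DirectSum.smul_apply]
  by_cases hi : i ∈ S
  · have : e i = h i 1 := DFinsupp.mk_of_mem hi
    erw [this]
    rw [← map_smul, smul_eq_mul, mul_one, hh]
  · have : e i = 0 := DFinsupp.mk_of_notMem hi
    erw [this]
    rw [smul_zero]
    exact (hS _ _ hi).symm

open DirectSum in
theorem directSum_cogen (En : MaximalSpectrum R → Type u)
    [∀ 𝔫, AddCommGroup (En 𝔫)] [∀ 𝔫, Module R (En 𝔫)]
    (j : ∀ 𝔫 : MaximalSpectrum R, (R ⧸ 𝔫.asIdeal) →ₗ[R] En 𝔫)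
    (hj : ∀ 𝔫, Function.Injective (j 𝔫))
    (hD : Module.Injective R (⨁ 𝔫, En 𝔫)) : Cogen R (⨁ 𝔫, En 𝔫) := by
  classical
  intro N _ _ x hx
  by_contra hne
  let A : Ideal R := LinearMap.ker (LinearMap.toSpanSingleton R N x)
  have hA : A ≠ ⊤ := by
    intro h
    have : (1 : R) ∈ A := by rw [h]; trivial
    apply hne
    simpa [A] using this
  obtain ⟨m, hm, hAm⟩ := Ideal.exists_le_maximal A hA
  let 𝔫 : MaximalSpectrum R := ⟨m, hm⟩
  let f : (R ⧸ A) →ₗ[R] N := A.liftQ (LinearMap.toSpanSingleton R N x) le_rfl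
  have hf : Function.Injective f := by
    rw [← LinearMap.ker_eq_bot]
    exact Submodule.ker_liftQ_eq_bot _ _ _ le_rfl
  let g : (R ⧸ A) →ₗ[R] ⨁ 𝔫, En 𝔫 :=
    DirectSum.lof R _ En 𝔫 ∘ₗ j 𝔫 ∘ₗ Submodule.factor hAm
  obtain ⟨h, hh⟩ := hD.out f hf g
  have h1 := hh (Submodule.Quotient.mk 1)
  have h2 : f (Submodule.Quotient.mk 1) = x :=
    one_smul R x
  rw [h2, hx h] at h1
  have h3 : j 𝔫 (Submodule.Quotient.mk 1) = 0 := by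
    apply DirectSum.of_injective (β := En) 𝔫
    rw [map_zero]
    exact h1.symm
  have h4 : (Submodule.Quotient.mk 1 : R ⧸ 𝔫.asIdeal) = 0 := hj 𝔫 (by rw [h3, map_zero])
  rw [Submodule.Quotient.mk_eq_zero] at h4
  exact hm.ne_top ((Ideal.eq_top_iff_one _).2 h4)

variable {D : Type u} [AddCommGroup D] [Module R D]

section basic
variable {X Y Z : Type u} [AddCommGroup X] [AddCommGroup Y] [AddCommGroup Z]
  [Module R X] [Module R Y] [Module R Z]

theorem extend (hD : Module.Injective R D) (f : X →ₗ[R] Y) (hf : Function.Injective f)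
    (g : X →ₗ[R] D) : ∃ h : Y →ₗ[R] D, h ∘ₗ f = g := by
  obtain ⟨h, hh⟩ := hD.out f hf g
  exact ⟨h, LinearMap.ext hh⟩

theorem lcomp_inj {f : X →ₗ[R] Y} (hf : Function.Surjective f) :
    Function.Injective (LinearMap.lcomp R D f) := by
  intro a b h
  ext y
  obtain ⟨x, rfl⟩ := hf y
  exact LinearMap.congr_fun h x

theorem ext_dual (hC : Cogen R D) {f g : X →ₗ[R] Y}
    (h : ∀ φ : Y →ₗ[R] D, φ ∘ₗ f = φ ∘ₗ g) : f = g := by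
  ext x
  rw [← sub_eq_zero]
  refine hC _ _ fun φ => ?_
  rw [map_sub, sub_eq_zero]
  exact LinearMap.congr_fun (h φ) x

/-- `x ∈ N` if all functionals that vanish on `N` vanish at `x`. -/
theorem mem_of_dual (hC : Cogen R D) (N : Submodule R X) (x : X)
    (h : ∀ φ : X →ₗ[R] D, (∀ y ∈ N, φ y = 0) → φ x = 0) : x ∈ N := by
  rw [← Submodule.Quotient.mk_eq_zero]
  refine hC _ _ fun g => ?_
  refine h (g ∘ₗ N.mkQ) fun y hy => ?_
  have : N.mkQ y = 0 := by simpa using hy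
  simp [this]

theorem surj_of_lcomp_inj (hC : Cogen R D) {f : X →ₗ[R] Y}
    (hf : Function.Injective (LinearMap.lcomp R D f)) : Function.Surjective f := by
  intro y
  refine mem_of_dual hC (LinearMap.range f) y fun φ h => ?_
  have : φ = 0 := hf (by ext x; simpa using h (f x) ⟨x, rfl⟩)
  simp [this]

theorem inj_of_lcomp_surj (hC : Cogen R D) {f : X →ₗ[R] Y}
    (hf : Function.Surjective (LinearMap.lcomp R D f)) : Function.Injective f := by
  rw [injective_iff_map_eq_zero]
  intro x hx
  refine hC _ _ fun g => ?_
  obtain ⟨g', rfl⟩ := hf g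
  simp [hx]

theorem dual_injective_of_flat (hD : Module.Injective R D) [Module.Flat R X] :
    Module.Injective R (X →ₗ[R] D) := by
  refine ⟨fun A B _ _ _ _ f hf g => ?_⟩
  have h1 := Module.Flat.rTensor_preserves_injective_linearMap (M := X) f hf
  obtain ⟨h, hh⟩ := hD.out _ h1 (TensorProduct.lift g)
  refine ⟨TensorProduct.curry h, fun a => ?_⟩
  ext x
  have := hh (a ⊗ₜ x)
  simpa using this

theorem flat_of_dual_injective (hC : Cogen R D)
    (h : Module.Injective R (X →ₗ[R] D)) : Module.Flat R X := by
  rw [Module.Flat.iff_rTensor_preserves_injective_linearMap]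
  intro A B _ _ _ _ f hf
  refine inj_of_lcomp_surj hC fun φ => ?_
  obtain ⟨k, hk⟩ := h.out f hf (TensorProduct.curry φ)
  refine ⟨TensorProduct.lift k, ?_⟩
  ext a x
  have := LinearMap.congr_fun (hk a) x
  simpa using this

theorem dual_full (hX : IsMatlisReflexive R D X) (k : (X →ₗ[R] D) →ₗ[R] (Y →ₗ[R] D)) :
    ∃ h : Y →ₗ[R] X, ∀ φ, φ ∘ₗ h = k φ := by
  let e := LinearEquiv.ofBijective _ hX
  refine ⟨e.symm.toLinearMap ∘ₗ k.flip, fun φ => ?_⟩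
  ext y
  have : e (e.symm (k.flip y)) φ = k.flip y φ := by rw [e.apply_symm_apply]
  exact this

theorem reflexive_sub (hD : Module.Injective R D) (hC : Cogen R D)
    (hX : IsMatlisReflexive R D X) (i : Y →ₗ[R] X) (hi : Function.Injective i) :
    IsMatlisReflexive R D Y := by
  constructor
  · rw [injective_iff_map_eq_zero]
    intro y hy
    exact hC _ _ fun g => LinearMap.congr_fun hy g
  · intro φ
    obtain ⟨p, hp⟩ := hX.2 (φ ∘ₗ LinearMap.lcomp R D i)
    have hp' : ∀ f : X →ₗ[R] D, f p = φ (f ∘ₗ i) := fun f => LinearMap.congr_fun hp f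
    have hmem : p ∈ LinearMap.range i := by
      refine mem_of_dual hC _ _ fun f hf => ?_
      rw [hp']
      have : f ∘ₗ i = 0 := by ext y; exact hf _ ⟨y, rfl⟩
      rw [this, map_zero]
    obtain ⟨y, rfl⟩ := hmem
    refine ⟨y, ?_⟩
    refine LinearMap.ext fun f => ?_
    obtain ⟨f', rfl⟩ := extend hD i hi f
    rw [← hp']
    rfl

theorem precover_of_reflexive (hD : Module.Injective R D) (hC : Cogen R D) [Module.Flat R X]
    (hX : IsMatlisReflexive R D X) (p : X →ₗ[R] Y) (hp : Function.Surjective p) :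
    IsFlatPrecover R p := by
  refine ⟨inferInstance, fun F' _ _ hF' g => ?_⟩
  obtain ⟨k, hk⟩ := (dual_injective_of_flat (X := F') hD).out (LinearMap.lcomp R D p)
    (lcomp_inj hp) (LinearMap.lcomp R D g)
  obtain ⟨h, hh⟩ := dual_full hX k
  refine ⟨h, ext_dual hC fun φ => ?_⟩
  rw [← LinearMap.comp_assoc, hh]
  exact hk φ

theorem ess_inj {E : Type u} [AddCommGroup E] [Module R E] {S : Submodule R E} (hS : Ess S)
    (k : E →ₗ[R] Z) (hk : ∀ x ∈ S, k x = 0 → x = 0) : Function.Injective k := by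
  rw [← LinearMap.ker_eq_bot]
  by_contra hne
  refine hS _ hne ?_
  rw [eq_bot_iff]
  rintro x ⟨h1, h2⟩
  exact hk x h2 h1

theorem cover_iff (hD : Module.Injective R D) (hC : Cogen R D) [Module.Flat R X]
    (hX : IsMatlisReflexive R D X) (p : X →ₗ[R] Y) (hp : Function.Surjective p) :
    IsFlatCover R p ↔ Ess (LinearMap.range (LinearMap.lcomp R D p)) := by
  have hI := dual_injective_of_flat (X := X) hD
  constructor
  · rintro ⟨_, hc⟩ N hN hbot
    let S := LinearMap.range (LinearMap.lcomp R D p)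
    have hinj : Function.Injective (N.mkQ ∘ₗ S.subtype) := by
      rw [injective_iff_map_eq_zero]
      rintro ⟨x, hx⟩ h
      have hxN : x ∈ N := by simpa using h
      have : x ∈ N ⊓ S := ⟨hxN, hx⟩
      rw [hbot] at this
      ext1
      simpa using this
    obtain ⟨k, hk⟩ := hI.out _ hinj S.subtype
    obtain ⟨h, hh⟩ := dual_full hX (k ∘ₗ N.mkQ)
    have hph : p ∘ₗ h = p := by
      refine ext_dual hC fun φ => ?_
      rw [← LinearMap.comp_assoc, hh]
      exact hk ⟨φ ∘ₗ p, ⟨φ, rfl⟩⟩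
    have hb := hc h hph
    apply hN
    rw [eq_bot_iff]
    intro x hx
    have h1 : x ∘ₗ h = 0 := by
      rw [hh]
      have : N.mkQ x = 0 := by simpa using hx
      simp [this]
    have : x = 0 := lcomp_inj (D := D) hb.2 (by rw [map_zero]; exact h1)
    simp [this]
  · intro hE
    refine ⟨precover_of_reflexive hD hC hX p hp, fun h hph => ?_⟩
    let k := LinearMap.lcomp R D h
    have hfix : ∀ x ∈ LinearMap.range (LinearMap.lcomp R D p), k x = x := by
      rintro _ ⟨φ, rfl⟩
      change (φ ∘ₗ p) ∘ₗ h = φ ∘ₗ p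
      rw [LinearMap.comp_assoc, hph]
    have kinj : Function.Injective k := ess_inj hE k fun x hx h0 => by rw [← hfix x hx, h0]
    obtain ⟨r, hr⟩ := hI.out k kinj LinearMap.id
    have rinj : Function.Injective r := ess_inj hE r fun x hx h0 => by
      have := hr x
      rw [hfix x hx, h0] at this
      exact this.symm
    have ksurj : Function.Surjective k := fun y => ⟨r y, rinj (by rw [hr]; rfl)⟩
    exact ⟨inj_of_lcomp_surj hC ksurj, surj_of_lcomp_inj hC kinj⟩

end basic

theorem step (hD : Module.Injective R D) (hC : Cogen R D)
    {P K F L : Type u} [AddCommGroup P] [AddCommGroup K] [AddCommGroup F] [AddCommGroup L]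
    [Module R P] [Module R K] [Module R F] [Module R L] [Module.Flat R P] [Module.Flat R F]
    (hP : IsMatlisReflexive R D P)
    (p : P →ₗ[R] K) (hp : Function.Surjective p) (q : F →ₗ[R] L) (hq : Function.Surjective q)
    (a : K →ₗ[R] L) (b : L →ₗ[R] K) (hab : Function.Bijective (a ∘ₗ b))
    (hor : IsFlatCover R q ∨ Ess (LinearMap.range (LinearMap.lcomp R D q)))
    (K' : Submodule R P) (L' : Submodule R F)
    (hK' : K' = LinearMap.ker p) (hL' : L' = LinearMap.ker q) :
    (IsFlatCover R q ∧ Ess (LinearMap.range (LinearMap.lcomp R D q))) ∧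
      ∃ (a' : K' →ₗ[R] L') (b' : L' →ₗ[R] K'), Function.Bijective (a' ∘ₗ b') := by
  have hpre := precover_of_reflexive hD hC hP p hp
  -- lifting when `q` is a cover
  have key : IsFlatCover R q → ∃ (α : P →ₗ[R] F) (β : F →ₗ[R] P),
      q ∘ₗ α = a ∘ₗ p ∧ p ∘ₗ β = b ∘ₗ q ∧ Function.Bijective (α ∘ₗ β) := by
    intro hc
    obtain ⟨α, hα⟩ := hc.1.2 P inferInstance (a ∘ₗ p)
    obtain ⟨β, hβ⟩ := hpre.2 F inferInstance (b ∘ₗ q)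
    refine ⟨α, β, hα, hβ, ?_⟩
    let σ := LinearEquiv.ofBijective _ hab
    have hσ : ∀ x, σ x = a (b x) := fun x => rfl
    obtain ⟨g, hg⟩ := hc.1.2 F inferInstance (σ.symm.toLinearMap ∘ₗ q)
    have hα' : ∀ x, q (α x) = a (p x) := LinearMap.congr_fun hα
    have hβ' : ∀ x, p (β x) = b (q x) := LinearMap.congr_fun hβ
    have hg' : ∀ x, q (g x) = σ.symm (q x) := LinearMap.congr_fun hg
    have h1 := hc.2 ((α ∘ₗ β) ∘ₗ g) (by
      ext x
      simp only [LinearMap.comp_apply]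
      rw [hα', hβ', hg', ← hσ, σ.apply_symm_apply])
    have h2 := hc.2 (g ∘ₗ (α ∘ₗ β)) (by
      ext x
      simp only [LinearMap.comp_apply]
      rw [hg', hα', hβ', ← hσ, σ.symm_apply_apply])
    rw [LinearMap.coe_comp] at h1 h2
    exact ⟨h2.1.of_comp, h1.2.of_comp⟩
  have hboth : IsFlatCover R q ∧ Ess (LinearMap.range (LinearMap.lcomp R D q)) := by
    have hF : IsMatlisReflexive R D F := by
      rcases hor with hc | hE
      · obtain ⟨α, β, -, -, h⟩ := key hc
        rw [LinearMap.coe_comp] at h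
        exact reflexive_sub hD hC hP β h.1.of_comp
      · have hIF := dual_injective_of_flat (X := F) hD
        have hIP := dual_injective_of_flat (X := P) hD
        obtain ⟨β, hβ⟩ := hIF.out (LinearMap.lcomp R D p) (lcomp_inj hp)
          (LinearMap.lcomp R D q ∘ₗ LinearMap.lcomp R D b)
        obtain ⟨α, hα⟩ := hIP.out (LinearMap.lcomp R D q) (lcomp_inj hq)
          (LinearMap.lcomp R D p ∘ₗ LinearMap.lcomp R D a)
        have hinj : Function.Injective (β ∘ₗ α) := by
          refine ess_inj hE _ ?_
          rintro _ ⟨ψ, rfl⟩ h0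
          rw [LinearMap.comp_apply, hα] at h0
          have h0' : LinearMap.lcomp R D q (LinearMap.lcomp R D b (LinearMap.lcomp R D a ψ)) = 0 := by
            rw [← h0]
            exact (hβ (LinearMap.lcomp R D a ψ)).symm
          have h1 : LinearMap.lcomp R D (a ∘ₗ b) ψ = 0 :=
            lcomp_inj (D := D) hq (by rw [map_zero]; exact h0')
          have h2 : ψ = 0 := lcomp_inj (D := D) hab.2 (by rw [h1, map_zero])
          rw [h2, map_zero]
        rw [LinearMap.coe_comp] at hinj
        obtain ⟨r, hr⟩ := hIF.out α hinj.of_comp LinearMap.id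
        obtain ⟨h, hh⟩ := dual_full hP r
        refine reflexive_sub hD hC hP h (inj_of_lcomp_surj hC fun ψ => ⟨α ψ, ?_⟩)
        exact (hh _).trans (hr ψ)
    have := cover_iff hD hC hF q hq
    tauto
  refine ⟨hboth, ?_⟩
  obtain ⟨α, β, hα, hβ, hb⟩ := key hboth.1
  have hα' : ∀ x, q (α x) = a (p x) := LinearMap.congr_fun hα
  have hβ' : ∀ x, p (β x) = b (q x) := LinearMap.congr_fun hβ
  subst hK' hL'
  refine ⟨α.restrict (fun x hx => ?_), β.restrict (fun x hx => ?_), ?_, ?_⟩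
  · rw [LinearMap.mem_ker] at hx ⊢
    rw [hα', hx, map_zero]
  · rw [LinearMap.mem_ker] at hx ⊢
    rw [hβ', hx, map_zero]
  · intro x y hxy
    apply Subtype.ext
    apply hb.1
    exact congrArg Subtype.val hxy
  · rintro ⟨y, hy⟩
    obtain ⟨x, hx⟩ := hb.2 y
    refine ⟨⟨x, ?_⟩, Subtype.ext hx⟩
    rw [LinearMap.mem_ker] at hy ⊢
    apply hab.1
    rw [map_zero, ← hy, ← hx]
    simp only [LinearMap.comp_apply]
    rw [hα', hβ']

theorem chain (hD : Module.Injective R D) (hC : Cogen R D)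
    {M : Type u} [AddCommGroup M] [Module R M]
    (P : ℕ → Type u) [∀ n, AddCommGroup (P n)] [∀ n, Module R (P n)]
    (p : P 0 →ₗ[R] M) (e : ∀ n, P (n + 1) →ₗ[R] P n)
    (hp : Function.Surjective p) (he0 : LinearMap.range (e 0) = LinearMap.ker p)
    (he : ∀ n, LinearMap.range (e (n + 1)) = LinearMap.ker (e n))
    (hPf : ∀ n, Module.Flat R (P n)) (hPr : ∀ n, IsMatlisReflexive R D (P n))
    (F : ℕ → Type u) [∀ n, AddCommGroup (F n)] [∀ n, Module R (F n)]
    (q : F 0 →ₗ[R] M) (d : ∀ n, F (n + 1) →ₗ[R] F n)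
    (hq : Function.Surjective q) (hd0 : LinearMap.range (d 0) = LinearMap.ker q)
    (hd : ∀ n, LinearMap.range (d (n + 1)) = LinearMap.ker (d n))
    (hFf : ∀ n, Module.Flat R (F n))
    (h0 : IsFlatCover R q ∨ Ess (LinearMap.range (LinearMap.lcomp R D q)))
    (h1 : ∀ n, IsFlatCover R (d n).rangeRestrict ∨
      Ess (LinearMap.range (LinearMap.lcomp R D (d n).rangeRestrict))) :
    (IsFlatCover R q ∧ Ess (LinearMap.range (LinearMap.lcomp R D q))) ∧
    ∀ n, IsFlatCover R (d n).rangeRestrict ∧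
      Ess (LinearMap.range (LinearMap.lcomp R D (d n).rangeRestrict)) := by
  have s0 := step hD hC (hPr 0) p hp q hq LinearMap.id LinearMap.id
    (by exact Function.bijective_id) h0 _ _ he0 hd0
  refine ⟨s0.1, ?_⟩
  have sn := fun n a b hab => step hD hC (hPr (n + 1)) (e n).rangeRestrict
    (e n).surjective_rangeRestrict (d n).rangeRestrict (d n).surjective_rangeRestrict a b hab
    (h1 n) _ _ ((he n).trans (LinearMap.ker_rangeRestrict _).symm)
    ((hd n).trans (LinearMap.ker_rangeRestrict _).symm)
  have ind : ∀ n, ∃ (a : LinearMap.range (e n) →ₗ[R] LinearMap.range (d n))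
      (b : LinearMap.range (d n) →ₗ[R] LinearMap.range (e n)),
      Function.Bijective (a ∘ₗ b) := by
    intro n
    induction n with
    | zero => exact s0.2
    | succ n ih =>
      obtain ⟨a, b, hab⟩ := ih
      exact (sn n a b hab).2
  intro n
  obtain ⟨a, b, hab⟩ := ind n
  exact (sn n a b hab).1

theorem range_lcomp_rangeRestrict (hD : Module.Injective R D) {X Y : Type u}
    [AddCommGroup X] [AddCommGroup Y] [Module R X] [Module R Y] (f : X →ₗ[R] Y) :
    LinearMap.range (LinearMap.lcomp R D f.rangeRestrict)
      = LinearMap.range (LinearMap.lcomp R D f) := by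
  ext φ
  constructor
  · rintro ⟨ψ, rfl⟩
    obtain ⟨ψ', rfl⟩ := extend hD (LinearMap.range f).subtype Subtype.val_injective ψ
    exact ⟨ψ', rfl⟩
  · rintro ⟨ψ, rfl⟩
    exact ⟨ψ ∘ₗ (LinearMap.range f).subtype, rfl⟩

theorem envelope_iff {E : Type u} [AddCommGroup E] [Module R E] (S : Submodule R E)
    (hE : Module.Injective R E) : IsInjectiveEnvelope R S.subtype ↔ Ess S := by
  unfold IsInjectiveEnvelope Ess
  rw [Submodule.range_subtype]
  exact ⟨fun h => h.2.2, fun h => ⟨hE, Subtype.val_injective, h⟩⟩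

theorem exact_dual (hD : Module.Injective R D) {X Y Z : Type u}
    [AddCommGroup X] [AddCommGroup Y] [AddCommGroup Z] [Module R X] [Module R Y] [Module R Z]
    (f : X →ₗ[R] Y) (g : Y →ₗ[R] Z) (h : LinearMap.range f = LinearMap.ker g) :
    LinearMap.range (LinearMap.lcomp R D g) = LinearMap.ker (LinearMap.lcomp R D f) := by
  rw [← range_lcomp_rangeRestrict hD g]
  ext φ
  constructor
  · rintro ⟨ψ, rfl⟩
    rw [LinearMap.mem_ker]
    ext x
    have : g.rangeRestrict (f x) = 0 := by
      apply Subtype.ext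
      have : f x ∈ LinearMap.ker g := h ▸ ⟨x, rfl⟩
      simpa using this
    simp [this]
  · intro hφ
    have hle : LinearMap.ker g ≤ LinearMap.ker φ := by
      rw [← h]
      rintro _ ⟨x, rfl⟩
      exact LinearMap.congr_fun hφ x
    refine ⟨(LinearMap.ker g).liftQ φ hle ∘ₗ g.quotKerEquivRange.symm.toLinearMap, ?_⟩
    ext x
    have : g.quotKerEquivRange.symm (g.rangeRestrict x) = Submodule.Quotient.mk x := by
      rw [LinearEquiv.symm_apply_eq]
      rfl
    simp only [LinearMap.lcomp_apply, LinearMap.comp_apply, LinearEquiv.coe_coe]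
    rw [this]
    rfl

theorem exact_of_dual (hC : Cogen R D) {X Y Z : Type u}
    [AddCommGroup X] [AddCommGroup Y] [AddCommGroup Z] [Module R X] [Module R Y] [Module R Z]
    (f : X →ₗ[R] Y) (g : Y →ₗ[R] Z) (hgf : g ∘ₗ f = 0)
    (h : LinearMap.range (LinearMap.lcomp R D g) = LinearMap.ker (LinearMap.lcomp R D f)) :
    LinearMap.range f = LinearMap.ker g := by
  apply le_antisymm
  · rintro _ ⟨x, rfl⟩
    exact LinearMap.congr_fun hgf x
  · intro y hy
    refine mem_of_dual hC _ _ fun φ hφ => ?_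
    have : φ ∈ LinearMap.ker (LinearMap.lcomp R D f) := by
      rw [LinearMap.mem_ker]
      ext x
      exact hφ _ ⟨x, rfl⟩
    rw [← h] at this
    obtain ⟨ψ, rfl⟩ := this
    rw [LinearMap.mem_ker] at hy
    simp [hy]

end Helpers

open DirectSum

/-- Over a commutative Noetherian ring, if `M` admits a resolution
consisting of Matlis reflexive flat modules, then a chain complex `F_• → M → 0` is a
minimal flat resolution of `M` iff the Matlis dual complex `0 → M^∨ → F_•^∨` is a
minimal injective resolution of `M^∨`.  Here the Matlis dualizing module `⊕ E(R/𝔫)`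
is presented by a family `En 𝔫` of injective envelopes `j 𝔫 : R/𝔫 → En 𝔫` of the
residue fields of the maximal ideals `𝔫` of `R`. -/
theorem minimalFlatResolution_iff_matlisDual_minimalInjectiveResolution [IsNoetherianRing R]
    (En : MaximalSpectrum R → Type u) [∀ 𝔫, AddCommGroup (En 𝔫)] [∀ 𝔫, Module R (En 𝔫)]
    (j : ∀ 𝔫 : MaximalSpectrum R, (R ⧸ 𝔫.asIdeal) →ₗ[R] En 𝔫)
    (hj : ∀ 𝔫, IsInjectiveEnvelope R (j 𝔫))
    {M : Type u} [AddCommGroup M] [Module R M]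
    (h : ∃ (F : ℕ → Type u) (_ : ∀ n, AddCommGroup (F n)) (_ : ∀ n, Module R (F n))
        (π : F 0 →ₗ[R] M) (d : ∀ n, F (n + 1) →ₗ[R] F n),
        Function.Surjective π ∧
          LinearMap.range (d 0) = LinearMap.ker π ∧
          (∀ n, LinearMap.range (d (n + 1)) = LinearMap.ker (d n)) ∧
          (∀ n, Module.Flat R (F n)) ∧
          ∀ n, IsMatlisReflexive R (⨁ 𝔫, En 𝔫) (F n)) :
    ∀ (F : ℕ → Type u) (_ : ∀ n, AddCommGroup (F n)) (_ : ∀ n, Module R (F n))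
      (π : F 0 →ₗ[R] M) (d : ∀ n, F (n + 1) →ₗ[R] F n),
      π ∘ₗ d 0 = 0 → (∀ n, d n ∘ₗ d (n + 1) = 0) →
      (IsMinimalFlatResolution R M F π d ↔
        IsMinimalInjectiveResolution R (M →ₗ[R] (⨁ 𝔫, En 𝔫))
          (fun n => F n →ₗ[R] (⨁ 𝔫, En 𝔫))
          (LinearMap.lcomp R (⨁ 𝔫, En 𝔫) π)
          (fun n => LinearMap.lcomp R (⨁ 𝔫, En 𝔫) (d n))) := by
  intro F _ _ q d hqd hdd
  obtain ⟨P, _, _, p, e, hp, he0, he, hPf, hPr⟩ := h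
  have hD : Module.Injective R (⨁ 𝔫, En 𝔫) := directSum_injective En fun i => (hj i).1
  have hC : Cogen R (⨁ 𝔫, En 𝔫) := directSum_cogen En j (fun i => (hj i).2.1) hD
  constructor
  · rintro ⟨hq, hd0, hd, hc0, hc⟩
    have hFf : ∀ n, Module.Flat R (F n) := by
      rintro (_ | n)
      · exact hc0.1.1
      · exact (hc n).1.1
    have hI : ∀ n, Module.Injective R (F n →ₗ[R] (⨁ 𝔫, En 𝔫)) := fun n =>
      have := hFf n
      dual_injective_of_flat hD
    obtain ⟨c0, c⟩ := chain hD hC P p e hp he0 he hPf hPr F q d hq hd0 hd hFf (Or.inl hc0)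
      (fun n => Or.inl (hc n))
    refine ⟨hI, lcomp_inj hq, exact_dual hD _ _ hd0, fun n => exact_dual hD _ _ (hd n),
      (envelope_iff _ (hI 0)).2 c0.2, fun n => (envelope_iff _ (hI (n + 1))).2 ?_⟩
    have := (c n).2
    rwa [range_lcomp_rangeRestrict hD] at this
  · rintro ⟨hI, hinj, hd0', hd', he0', he'⟩
    have hq := surj_of_lcomp_inj hC hinj
    have hd0 := exact_of_dual hC _ _ hqd hd0'
    have hd := fun n => exact_of_dual hC _ _ (hdd n) (hd' n)
    have hFf : ∀ n, Module.Flat R (F n) := fun n => flat_of_dual_injective hC (hI n)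
    obtain ⟨c0, c⟩ := chain hD hC P p e hp he0 he hPf hPr F q d hq hd0 hd hFf
      (Or.inr ((envelope_iff _ (hI 0)).1 he0'))
      (fun n => Or.inr (by
        rw [range_lcomp_rangeRestrict hD]
        exact (envelope_iff _ (hI (n + 1))).1 (he' n)))
    exact ⟨hq, hd0, hd, c0.1, fun n => (c n).1⟩
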